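/- Let w = u_{i_r}^{(r)}u_{i_{r−1}}^{(r−1)}⋯u_{i_1}^{(1)} with 0 ≤ i_k ≤ k for each k (so w ∈ W_{Δ_P} and gr(w) = Σ_{k=1}^r i_k e_k), and let 1 ≤ j ≤ m ≤ r. (a) If ℓ(u_j^{(m)}w) = j + ℓ(w), then gr(u_j^{(m)}w) = gr(w) + j·e_k for a unique 1 ≤ k ≤ r. (b) If ℓ(s_jw) = ℓ(w) − 1, then gr(s_jw) = gr(w) − e_k for a unique 1 ≤ k ≤ r. (c) ℓ(ws_j) = ℓ(w) − 1 if and only if i_j ≥ i_{j−1} + 1 (with i_0 := 0); in that case gr(ws_j) is obtained from gr(w) by replacing the (j−1)-st component i_{j−1} by i_j − 1 and the j-th component i_j by i_{j−1} (for j = 1 this reads gr(ws_1) = gr(w) − e_1). Furthermore, if w' ∈ W_{Δ_P} satisfies ℓ(w'w) = ℓ(w) ± ℓ(w'), then there exist nonnegative integers p_1,…,p_r with Σ_{k=1}^r p_k = ℓ(w') and gr(w'w) = gr(w) ± Σ_{k=1}^r p_k e_k. -/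

import Mathlib

open scoped BigOperators

/-- A reduced crystallographic root system with a fixed base `α_1, …, α_n` of simple
roots, bundled with its Weyl group `W`.  A root `γ` is recorded by its integer
coordinate vector in the basis of simple roots (so the `i`-th simple root is
`Pi.single i 1`), and `cor γ` is the coordinate vector of the coroot `γ^∨` in the
basis of simple coroots (hence `cor γ i = ⟨χ_i, γ^∨⟩` for the fundamental weights
`χ_i`).  `A i j = ⟨α_i, α_j^∨⟩` is the Cartan matrix, `σ γ` is the reflection `s_γ`
and `act` is the action of the Weyl group on the root lattice. -/
structure RootSystemData (n : ℕ) where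
  A : Fin n → Fin n → ℤ
  R : Finset (Fin n → ℤ)
  cor : (Fin n → ℤ) → (Fin n → ℤ)
  W : Type
  [grp : Group W]
  σ : (Fin n → ℤ) → W
  act : W → (Fin n → ℤ) → (Fin n → ℤ)
  simple_mem : ∀ i : Fin n, (Pi.single i 1 : Fin n → ℤ) ∈ R
  root_ne_zero : ∀ γ ∈ R, γ ≠ 0
  neg_mem : ∀ γ ∈ R, -γ ∈ R
  pos_or_neg : ∀ γ ∈ R, (∀ i, 0 ≤ γ i) ∨ (∀ i, γ i ≤ 0)
  reduced : ∀ γ ∈ R, ∀ k : ℤ, k • γ ∈ R → k = 1 ∨ k = -1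
  cor_simple : ∀ i : Fin n, cor (Pi.single i 1) = Pi.single i 1
  cor_neg : ∀ γ ∈ R, cor (-γ) = -(cor γ)
  pair_self : ∀ γ ∈ R, (∑ i, ∑ j, γ i * A i j * cor γ j) = 2
  act_one : ∀ x, act 1 x = x
  act_mul : ∀ w w' x, act (w * w') x = act w (act w' x)
  act_refl : ∀ γ ∈ R, ∀ x, act (σ γ) x = x - (∑ i, ∑ j, x i * A i j * cor γ j) • γ
  act_mem : ∀ (w : W), ∀ γ ∈ R, act w γ ∈ R
  cor_refl : ∀ γ ∈ R, ∀ β ∈ R,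
    cor (act (σ γ) β) = cor β - (∑ i, ∑ j, γ i * A i j * cor β j) • cor γ
  refl_sq : ∀ γ ∈ R, σ γ * σ γ = 1
  refl_act : ∀ (w : W), ∀ γ ∈ R, σ (act w γ) = w * σ γ * w⁻¹
  act_faithful : ∀ w w' : W, (∀ γ ∈ R, act w γ = act w' γ) → w = w'
  generated : ∀ w : W, ∃ l : List (Fin n), w = (l.map fun i => σ (Pi.single i 1)).prod

namespace RootSystemData

instance {n : ℕ} (c : RootSystemData n) : Group c.W := c.grp

/-- the pairing `⟨x, λ⟩` between an element `x` of the root lattice (coordinates in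
the basis of simple roots) and an element `λ` of the coroot lattice (coordinates in
the basis of simple coroots) -/
def pair {n : ℕ} (c : RootSystemData n) (x lam : Fin n → ℤ) : ℤ :=
  ∑ i, ∑ j, x i * c.A i j * lam j

/-- the `i`-th simple root -/
def sroot {n : ℕ} (_c : RootSystemData n) (i : Fin n) : Fin n → ℤ := Pi.single i 1

/-- the simple reflection `s_i` -/
def s {n : ℕ} (c : RootSystemData n) (i : Fin n) : c.W := c.σ (c.sroot i)

/-- `s_{α_{t+1}}` for a `0`-based natural number index `t` (`= 1` when out of range) -/
def sN {n : ℕ} (c : RootSystemData n) (t : ℕ) : c.W := if h : t < n then c.s ⟨t, h⟩ else 1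

/-- `⟨2ρ, λ⟩ = Σ_{β ∈ R^+} ⟨β, λ⟩`, where `ρ` is the half-sum of the positive roots -/
def pairTwoRho {n : ℕ} (c : RootSystemData n) (lam : Fin n → ℤ) : ℤ :=
  ∑ β ∈ c.R, if ∀ i, 0 ≤ β i then c.pair β lam else 0

/-- the length of `w ∈ W` with respect to the simple reflections -/
noncomputable def len {n : ℕ} (c : RootSystemData n) (w : c.W) : ℕ :=
  sInf {k | ∃ l : List (Fin n), l.length = k ∧ (l.map c.s).prod = w}

/-- the parabolic subgroup `W_S` generated by the simple reflections indexed by `S` -/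
def Wsub {n : ℕ} (c : RootSystemData n) (S : Finset (Fin n)) : Subgroup c.W :=
  Subgroup.closure (c.s '' ↑S)

/-- `w ∈ W_T^S`: `w ∈ W_T` and `w` has minimal length in the coset `w W_S` -/
def MinRep {n : ℕ} (c : RootSystemData n) (T S : Finset (Fin n)) (w : c.W) : Prop :=
  w ∈ c.Wsub T ∧ ∀ u ∈ c.Wsub S, c.len w ≤ c.len (w * u)

/-- `w` is the longest element of `W_S` -/
def IsLongest {n : ℕ} (c : RootSystemData n) (S : Finset (Fin n)) (w : c.W) : Prop :=
  w ∈ c.Wsub S ∧ ∀ v ∈ c.Wsub S, c.len v ≤ c.len w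

end RootSystemData

/-- the support of `γ` is contained in `S`, i.e. `γ` lies in the span of
`{α_i : i ∈ S}` (for a root `γ`, membership in `R_S`) -/
def suppIn {n : ℕ} (S : Finset (Fin n)) (γ : Fin n → ℤ) : Prop :=
  ∀ i, i ∉ S → γ i = 0

/-- `Δ_j` for `0 ≤ j ≤ r+1`: the index set of the first `j` simple roots for `j ≤ r`,
and all of `Δ` for `j = r+1`.  (Indices of simple roots are `0`-based, so
`α_1, …, α_j` correspond to the indices `0, …, j-1`.) -/
def deltaSet (n r j : ℕ) : Finset (Fin n) :=
  if j = r + 1 then Finset.univ else Finset.univ.filter fun i => (i : ℕ) < j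

namespace RootSystemData

/-- `v 0, …, v r` (standing for `v_1, …, v_{r+1}`) is the decomposition of `w`
associated to `(Δ_P, Υ)`:  each `v_i ∈ W_{Δ_i}^{Δ_{i-1}}` and `w = v_{r+1} v_r ⋯ v_1`. -/
def IsDecomp {n : ℕ} (c : RootSystemData n) (r : ℕ) (w : c.W)
    (v : Fin (r + 1) → c.W) : Prop :=
  (∀ k : Fin (r + 1), c.MinRep (deltaSet n r ((k : ℕ) + 1)) (deltaSet n r (k : ℕ)) (v k)) ∧
    w = (List.ofFn v).reverse.prod

/-- the first `m` simple roots `α_1, …, α_m` form a path of type `A_m`: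
`⟨α_i, α_j^∨⟩ = -1` if `|i-j| = 1` and `⟨α_i, α_j^∨⟩ = 0` if `|i-j| ≥ 2`. -/
def PathA {n : ℕ} (c : RootSystemData n) (m : ℕ) : Prop :=
  ∀ i j : Fin n, (i : ℕ) < m → (j : ℕ) < m →
    (((i : ℕ) + 1 = (j : ℕ) ∨ (j : ℕ) + 1 = (i : ℕ)) → c.A i j = -1) ∧
    ((i : ℕ) + 2 ≤ (j : ℕ) ∨ (j : ℕ) + 2 ≤ (i : ℕ) → c.A i j = 0)

/-- `u_{[k,m]} = s_k s_{k+1} ⋯ s_m` (`1`-based indices; `u_{[k,m]} = 1` for `k > m`) -/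
def uu {n : ℕ} (c : RootSystemData n) (k m : ℕ) : c.W :=
  ((List.range' k (m + 1 - k)).map fun t => c.sN (t - 1)).prod

/-- `u_i^{(m)} = s_{m-i+1} s_{m-i+2} ⋯ s_m` -/
def uElt {n : ℕ} (c : RootSystemData n) (i m : ℕ) : c.W := c.uu (m - i + 1) m

end RootSystemData

/-- strict lexicographic order on `Fin m → ℤ` -/
def lexLT {m : ℕ} (x y : Fin m → ℤ) : Prop :=
  ∃ j, x j < y j ∧ ∀ k, k < j → x k = y k

/-- lexicographic order on `Fin m → ℤ` -/
def lexLE {m : ℕ} (x y : Fin m → ℤ) : Prop := x = y ∨ lexLT x y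

/-- the grading `gr(q_{α_{j+1}^∨}) ∈ ℤ^{r+1}` (for the `0`-based index `j < r`), when
`Δ_P` is of type `A_r`: in `1`-based terms, `gr(q_{α_1^∨}) = 2·e_1` and
`gr(q_{α_j^∨}) = (1-j)·e_{j-1} + (1+j)·e_j` for `2 ≤ j ≤ r`. -/
def grQ (r j : ℕ) : Fin (r + 1) → ℤ := fun k =>
  (if (k : ℕ) = j then (j : ℤ) + 2 else 0) + (if (k : ℕ) + 1 = j then -(j : ℤ) else 0)

/-- the grading `gr(q_λ)` for `λ ∈ Q_P^∨` (coordinates in simple coroots), extended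
additively from the `gr(q_{α_j^∨})`, when `Δ_P` is of type `A_r` -/
def grQlam (n r : ℕ) (lam : Fin n → ℤ) : Fin (r + 1) → ℤ :=
  fun k => ∑ j, lam j * grQ r (j : ℕ) k

/-!
The length of `w` is the number of its inversions, and the factor `v_t` of the decomposition of `w`
accounts for the inversions supported in `Δ_t` but not in `Δ_{t-1}`: so `gr w` counts the inversions
of `w` by level. If `ℓ(xy) = ℓ(x) + ℓ(y)`, the inversions of `xy` are those of `y` together with
`y⁻¹ Inv(x)`, and `gr(xy) - gr(y)` counts `y⁻¹ Inv(x)` by level.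

In type `A_r` with roots `ε_a - ε_b`, `0 ≤ a, b ≤ r`, an element `w` of `W_{Δ_P}` is a permutation
`π` of `{0, …, r}`, and the positive roots of level `t` are the `ε_a - ε_t` with `a < t`. Hence
`gr w` is the Lehmer code of `π`, on which right multiplication by an adjacent transposition is easy
to follow. The inversions of `u_j^{(m)}` are `ε_a - ε_m` with `m - j ≤ a < m`; if the lengths add,
`w⁻¹` sends them to positive roots ending in `ε_{π⁻¹ m}`, all of the same level.
-/

namespace RootSystemData

open scoped Pointwise

variable {n : ℕ} {c : RootSystemData n}

/-! ### The action on the root lattice -/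

theorem s_mul_self (i : Fin n) : c.s i * c.s i = 1 := c.refl_sq _ (c.simple_mem i)

theorem inv_s (i : Fin n) : (c.s i)⁻¹ = c.s i := inv_eq_of_mul_eq_one_left (c.s_mul_self i)

theorem A_self (i : Fin n) : c.A i i = 2 := by
  simpa [c.cor_simple, Pi.single_apply] using c.pair_self _ (c.simple_mem i)

theorem act_s (i : Fin n) (x : Fin n → ℤ) :
    c.act (c.s i) x = x - (∑ k, x k * c.A k i) • c.sroot i := by
  simp only [s, sroot]
  rw [c.act_refl _ (c.simple_mem i), c.cor_simple]
  simp [Pi.single_apply]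

theorem act_add (w : c.W) (x y : Fin n → ℤ) : c.act w (x + y) = c.act w x + c.act w y := by
  obtain ⟨l, rfl⟩ := c.generated w
  change c.act (l.map c.s).prod _ = c.act (l.map c.s).prod _ + c.act (l.map c.s).prod _
  induction l with
  | nil => simp [c.act_one]
  | cons i l ih =>
    simp only [List.map_cons, List.prod_cons, c.act_mul, ih, act_s, Pi.add_apply, add_mul,
      Finset.sum_add_distrib]
    module

/-- The action of the Weyl group on the root lattice, available as `w • x`. Additivity is not
part of `RootSystemData`; it is inherited from the simple reflections, which generate `W`. -/
instance : DistribMulAction c.W (Fin n → ℤ) where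
  smul := c.act
  one_smul := c.act_one
  mul_smul := c.act_mul
  smul_zero w := (AddMonoidHom.mk' (c.act w) (act_add w)).map_zero
  smul_add := act_add

theorem smul_mem (w : c.W) {γ : Fin n → ℤ} (hγ : γ ∈ c.R) : w • γ ∈ c.R := c.act_mem w γ hγ

theorem s_smul_sroot (i k : Fin n) : c.s i • c.sroot k = c.sroot k - c.A k i • c.sroot i := by
  rw [show c.s i • c.sroot k = _ from act_s i _]
  simp [sroot, Pi.single_apply]

theorem s_smul_sroot_self (i : Fin n) : c.s i • c.sroot i = -c.sroot i := by
  rw [s_smul_sroot, A_self]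
  module

theorem s_smul_apply_of_ne {i k : Fin n} (h : k ≠ i) (x : Fin n → ℤ) : (c.s i • x) k = x k := by
  rw [show c.s i • x = _ from act_s i x]
  simp [sroot, h]

/-! ### Positive and negative roots -/

theorem sroot_nonneg (i : Fin n) : 0 ≤ c.sroot i := Pi.single_nonneg.2 zero_le_one

theorem nonneg_or_nonpos {γ : Fin n → ℤ} (hγ : γ ∈ c.R) : 0 ≤ γ ∨ γ ≤ 0 := c.pos_or_neg γ hγ

theorem not_nonneg_iff {γ : Fin n → ℤ} (hγ : γ ∈ c.R) : ¬ 0 ≤ γ ↔ γ ≤ 0 :=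
  ⟨(nonneg_or_nonpos hγ).resolve_left,
    fun hneg hpos => c.root_ne_zero γ hγ (le_antisymm hneg hpos)⟩

theorem nonneg_of_apply_pos {γ : Fin n → ℤ} (hγ : γ ∈ c.R) {i : Fin n} (hi : 0 < γ i) : 0 ≤ γ :=
  (nonneg_or_nonpos hγ).resolve_right fun h => (h i).not_gt hi

/-- Apart from `α_i` itself, a positive root has a positive coordinate other than the `i`-th,
which `s_i` does not change. -/
theorem s_smul_nonneg {i : Fin n} {γ : Fin n → ℤ} (hγ : γ ∈ c.R) (hpos : 0 ≤ γ)
    (hne : γ ≠ c.sroot i) : 0 ≤ c.s i • γ := by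
  by_cases hk : ∃ k, k ≠ i ∧ 0 < γ k
  · obtain ⟨k, hki, hk⟩ := hk
    exact nonneg_of_apply_pos (smul_mem _ hγ) ((s_smul_apply_of_ne hki γ).symm ▸ hk)
  · push Not at hk
    have hγi : γ = γ i • c.sroot i := by
      ext k
      by_cases h : k = i
      · subst h
        simp [sroot]
      · simpa [sroot, h] using le_antisymm (hk k h) (hpos k)
    rcases c.reduced _ (c.simple_mem i) (γ i) (hγi ▸ hγ) with h | h
    · exact absurd (by rwa [h, one_smul] at hγi) hne
    · exact absurd (hpos i) (by simp [h])

/-! ### Inversion sets -/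

open Classical in
/-- The inversion set of `w`: the positive roots made negative by `w`. -/
noncomputable def Inv (c : RootSystemData n) (w : c.W) : Finset (Fin n → ℤ) :=
  {β ∈ c.R | 0 ≤ β ∧ w • β ≤ 0}

theorem mem_Inv {w : c.W} {β : Fin n → ℤ} : β ∈ c.Inv w ↔ β ∈ c.R ∧ 0 ≤ β ∧ w • β ≤ 0 := by
  simp [Inv]

theorem Inv_one : c.Inv 1 = ∅ := by
  ext β
  simp only [mem_Inv, one_smul, Finset.notMem_empty, iff_false, not_and]
  exact fun hβ hpos hneg => (not_nonneg_iff hβ).2 hneg hpos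

theorem Inv_s (i : Fin n) : c.Inv (c.s i) = {c.sroot i} := by
  ext β
  rw [mem_Inv, Finset.mem_singleton]
  constructor
  · rintro ⟨hβ, hpos, hneg⟩
    by_contra hne
    exact (not_nonneg_iff (smul_mem _ hβ)).2 hneg (s_smul_nonneg hβ hpos hne)
  · rintro rfl
    exact ⟨c.simple_mem i, sroot_nonneg i, by simpa [s_smul_sroot_self] using sroot_nonneg i⟩

theorem mem_inv_smul_Inv {x y : c.W} {β : Fin n → ℤ} :
    β ∈ y⁻¹ • c.Inv x ↔ y • β ∈ c.R ∧ 0 ≤ y • β ∧ (x * y) • β ≤ 0 := by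
  rw [Finset.mem_inv_smul_finset_iff, mem_Inv, mul_smul]

theorem Inv_mul_subset (x y : c.W) : c.Inv (x * y) ⊆ c.Inv y ∪ y⁻¹ • c.Inv x := by
  intro β hβ
  obtain ⟨hβ, hpos, hneg⟩ := mem_Inv.1 hβ
  rw [Finset.mem_union, mem_Inv, mem_inv_smul_Inv]
  rcases nonneg_or_nonpos (smul_mem y hβ) with h | h
  exacts [.inr ⟨smul_mem y hβ, h, hneg⟩, .inl ⟨hβ, hpos, h⟩]

theorem disjoint_Inv_inv_smul_Inv (x y : c.W) : Disjoint (c.Inv y) (y⁻¹ • c.Inv x) := by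
  rw [Finset.disjoint_left]
  intro β hβ hβ'
  obtain ⟨hyβ, hpos, -⟩ := mem_inv_smul_Inv.1 hβ'
  exact (not_nonneg_iff hyβ).2 (mem_Inv.1 hβ).2.2 hpos

theorem card_Inv_union (x y : c.W) :
    (c.Inv y ∪ y⁻¹ • c.Inv x).card = (c.Inv y).card + (c.Inv x).card := by
  rw [Finset.card_union_of_disjoint (disjoint_Inv_inv_smul_Inv x y), Finset.card_smul_finset]

theorem Inv_mul_of_nonneg {x y : c.W} (h : ∀ γ ∈ c.Inv x, 0 ≤ y⁻¹ • γ) :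
    c.Inv (x * y) = c.Inv y ∪ y⁻¹ • c.Inv x := by
  refine (Inv_mul_subset x y).antisymm (Finset.union_subset (fun β hβ => ?_) fun β hβ => ?_)
  · obtain ⟨hβ, hpos, hneg⟩ := mem_Inv.1 hβ
    refine mem_Inv.2 ⟨hβ, hpos, (not_nonneg_iff (smul_mem _ hβ)).1 fun hxy => ?_⟩
    -- Otherwise `-(y • β)` would be an inversion of `x`, sent by `y⁻¹` to the negative `-β`.
    have hmem : -(y • β) ∈ c.Inv x :=
      mem_Inv.2 ⟨c.neg_mem _ (smul_mem y hβ), neg_nonneg.2 hneg, by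
        simpa [mul_smul] using hxy⟩
    have hnonpos : β ≤ 0 := by simpa using h _ hmem
    exact (not_nonneg_iff hβ).2 hnonpos hpos
  · obtain ⟨hyβ, -, hneg⟩ := mem_inv_smul_Inv.1 hβ
    have hpos : 0 ≤ β := by simpa using h _ (Finset.mem_inv_smul_finset_iff.1 hβ)
    exact mem_Inv.2 ⟨by simpa using smul_mem y⁻¹ hyβ, hpos, hneg⟩

theorem card_Inv_s_mul {w : c.W} {i : Fin n} (h : 0 ≤ w⁻¹ • c.sroot i) :
    (c.Inv (c.s i * w)).card = (c.Inv w).card + 1 := by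
  rw [Inv_mul_of_nonneg (by simpa [Inv_s] using h), card_Inv_union, Inv_s,
    Finset.card_singleton]

theorem Inv_inv (w : c.W) : c.Inv w⁻¹ = -(w • c.Inv w) := by
  ext β
  rw [Finset.mem_neg', ← Finset.inv_smul_mem_iff, mem_Inv, mem_Inv, smul_neg, smul_neg,
    smul_inv_smul, neg_nonneg, neg_nonpos]
  constructor
  · exact fun ⟨hβ, hpos, hneg⟩ => ⟨c.neg_mem _ (smul_mem _ hβ), hneg, hpos⟩
  · exact fun ⟨hβ, hneg, hpos⟩ => ⟨by simpa using smul_mem w (c.neg_mem _ hβ), hpos, hneg⟩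

/-! ### Length counts inversions -/

theorem len_prod_le (l : List (Fin n)) : c.len (l.map c.s).prod ≤ l.length :=
  Nat.sInf_le ⟨l, rfl, rfl⟩

theorem exists_reduced_word (w : c.W) :
    ∃ l : List (Fin n), l.length = c.len w ∧ (l.map c.s).prod = w := by
  obtain ⟨l, rfl⟩ := c.generated w
  exact Nat.sInf_mem (s := {k | ∃ l' : List (Fin n), l'.length = k ∧ (l'.map c.s).prod = _})
    ⟨l.length, l, rfl, rfl⟩

theorem len_s_mul_le (i : Fin n) (w : c.W) : c.len (c.s i * w) ≤ c.len w + 1 := by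
  obtain ⟨l, hl, rfl⟩ := exists_reduced_word w
  simpa [hl] using len_prod_le (c := c) (i :: l)

/-- The exchange property: moved through the word, `γ` becomes at some letter the simple root of
that letter, which is then deleted. -/
theorem exists_word_refl_mul (l : List (Fin n)) {γ : Fin n → ℤ} (hγ : γ ∈ c.R) (hpos : 0 ≤ γ)
    (hneg : (l.map c.s).prod⁻¹ • γ ≤ 0) :
    ∃ l' : List (Fin n), l'.length + 1 = l.length ∧
      (l'.map c.s).prod = c.σ γ * (l.map c.s).prod := by
  induction l generalizing γ with
  | nil => exact absurd hpos ((not_nonneg_iff hγ).2 (by simpa using hneg))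
  | cons k l ih =>
    by_cases hk : γ = c.sroot k
    · refine ⟨l, rfl, ?_⟩
      rw [List.map_cons, List.prod_cons, hk, ← mul_assoc]
      exact (one_mul _).symm.trans (congrArg (· * _) (s_mul_self k).symm)
    · rw [List.map_cons, List.prod_cons, mul_inv_rev, inv_s, mul_smul] at hneg
      obtain ⟨l', hl, hprod⟩ := ih (smul_mem _ hγ) (s_smul_nonneg hγ hpos hk) hneg
      refine ⟨k :: l', by simp [hl], ?_⟩
      have hconj : c.σ (c.s k • γ) = c.s k * c.σ γ * (c.s k)⁻¹ := c.refl_act _ _ hγ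
      simp only [List.map_cons, List.prod_cons, hprod, hconj, inv_s, ← mul_assoc, s_mul_self,
        one_mul]

theorem len_s_mul_lt {w : c.W} {i : Fin n} (h : w⁻¹ • c.sroot i ≤ 0) :
    c.len (c.s i * w) < c.len w := by
  obtain ⟨l, hl, rfl⟩ := exists_reduced_word w
  obtain ⟨l', hl', hprod⟩ := exists_word_refl_mul l (c.simple_mem i) (sroot_nonneg (c := c) i) h
  calc c.len (c.s i * (l.map c.s).prod) ≤ l'.length :=
        (congrArg c.len hprod).ge.trans (len_prod_le l')
    _ < c.len (l.map c.s).prod := by omega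

theorem len_eq_card_Inv (w : c.W) : c.len w = (c.Inv w).card := by
  obtain ⟨l, hl, rfl⟩ := exists_reduced_word w
  induction l with
  | nil => simpa [Inv_one] using hl.symm
  | cons i l ih =>
    rw [List.map_cons, List.prod_cons, List.length_cons] at *
    have hlen := len_s_mul_le i (l.map c.s).prod
    have hred := len_prod_le (c := c) l
    have hpos : 0 ≤ (l.map c.s).prod⁻¹ • c.sroot i := by
      refine (nonneg_or_nonpos (smul_mem _ (c.simple_mem i))).resolve_right fun hneg => ?_
      have := len_s_mul_lt hneg
      omega
    rw [card_Inv_s_mul hpos, ← ih (by omega)]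
    omega

theorem len_inv (w : c.W) : c.len w⁻¹ = c.len w := by
  rw [len_eq_card_Inv, Inv_inv, Finset.card_neg, Finset.card_smul_finset, len_eq_card_Inv]

theorem len_mul_of_nonneg {x y : c.W} (h : ∀ γ ∈ c.Inv x, 0 ≤ y⁻¹ • γ) :
    c.len (x * y) = c.len x + c.len y := by
  rw [len_eq_card_Inv, Inv_mul_of_nonneg h, card_Inv_union, ← len_eq_card_Inv,
    ← len_eq_card_Inv, add_comm]

theorem Inv_mul_of_len_mul {x y : c.W} (h : c.len (x * y) = c.len x + c.len y) :
    c.Inv (x * y) = c.Inv y ∪ y⁻¹ • c.Inv x := by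
  refine Finset.eq_of_subset_of_card_le (Inv_mul_subset x y) ?_
  rw [card_Inv_union, ← len_eq_card_Inv, ← len_eq_card_Inv, ← len_eq_card_Inv, h, add_comm]

theorem len_mul_s_of_nonneg {w : c.W} {i : Fin n} (h : 0 ≤ w • c.sroot i) :
    c.len (w * c.s i) = c.len w + 1 := by
  have hinv : 0 ≤ (w⁻¹)⁻¹ • c.sroot i := by rwa [inv_inv]
  rw [← len_inv, mul_inv_rev, inv_s, len_eq_card_Inv, card_Inv_s_mul hinv, ← len_eq_card_Inv,
    len_inv]

theorem len_mul_s_of_nonpos {w : c.W} {i : Fin n} (h : w • c.sroot i ≤ 0) :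
    c.len (w * c.s i) + 1 = c.len w := by
  have hpos : 0 ≤ (w * c.s i) • c.sroot i := by
    rwa [mul_smul, s_smul_sroot_self, smul_neg, neg_nonneg]
  rw [← len_mul_s_of_nonneg hpos, mul_assoc, s_mul_self, mul_one]

theorem len_mul_s_add_one_eq_iff {w : c.W} {i : Fin n} :
    c.len (w * c.s i) + 1 = c.len w ↔ w • c.sroot i ≤ 0 := by
  refine ⟨fun h => ?_, len_mul_s_of_nonpos⟩
  refine (nonneg_or_nonpos (smul_mem w (c.simple_mem i))).resolve_left fun hpos => ?_
  have := len_mul_s_of_nonneg hpos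
  omega

/-! ### Parabolic subgroups -/

variable {S T : Finset (Fin n)}

theorem s_mem_Wsub {i : Fin n} (hi : i ∈ S) : c.s i ∈ c.Wsub S :=
  Subgroup.subset_closure (Set.mem_image_of_mem _ hi)

theorem Wsub_mono (h : S ⊆ T) : c.Wsub S ≤ c.Wsub T :=
  Subgroup.closure_mono (Set.image_mono (Finset.coe_subset.2 h))

@[elab_as_elim]
theorem Wsub_induction {p : ∀ w, w ∈ c.Wsub S → Prop} (one : p 1 (one_mem _))
    (s_mul : ∀ i, ∀ hi : i ∈ S, ∀ w, ∀ hw : w ∈ c.Wsub S, p w hw →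
      p (c.s i * w) (mul_mem (s_mem_Wsub hi) hw))
    {w : c.W} (hw : w ∈ c.Wsub S) : p w hw := by
  refine Subgroup.closure_induction_left one ?_ ?_ hw
  · rintro _ ⟨i, hi, rfl⟩ w hw
    exact s_mul i hi w hw
  · rintro _ ⟨i, hi, rfl⟩ w hw
    simp_rw [inv_s]
    exact s_mul i hi w hw

theorem smul_apply_of_notMem {w : c.W} (hw : w ∈ c.Wsub S) (x : Fin n → ℤ) {k : Fin n}
    (hk : k ∉ S) : (w • x) k = x k := by
  induction hw using Wsub_induction with
  | one => rw [one_smul]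
  | s_mul i hi w hw ih => rw [mul_smul, s_smul_apply_of_ne (ne_of_mem_of_not_mem hi hk).symm, ih]

theorem suppIn_smul_iff {w : c.W} (hw : w ∈ c.Wsub S) (hST : S ⊆ T) {x : Fin n → ℤ} :
    suppIn T (w • x) ↔ suppIn T x :=
  forall₂_congr fun _ hk => by rw [smul_apply_of_notMem hw x fun hkS => hk (hST hkS)]

theorem suppIn_mono (h : S ⊆ T) {x : Fin n → ℤ} (hx : suppIn S x) : suppIn T x :=
  fun i hi => hx i fun hiS => hi (h hiS)

theorem suppIn_sroot {i : Fin n} (hi : i ∈ S) : suppIn S (c.sroot i) :=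
  fun _ hk => Pi.single_eq_of_ne (ne_of_mem_of_not_mem hi hk).symm _

/-- By induction on `w ∈ W_S`: the inversions of `s_i w` are those of `w` together with at most
`w⁻¹ α_i`. -/
theorem mem_of_mem_Inv {Φ : Set (Fin n → ℤ)} (hΦ : ∀ i ∈ S, c.sroot i ∈ Φ)
    (hstable : ∀ w ∈ c.Wsub S, ∀ β ∈ Φ, w • β ∈ Φ) {w : c.W} (hw : w ∈ c.Wsub S)
    {β : Fin n → ℤ} (hβ : β ∈ c.Inv w) : β ∈ Φ := by
  induction hw using Wsub_induction with
  | one => simp [Inv_one] at hβ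
  | s_mul i hi w hw ih =>
    rcases Finset.mem_union.1 (Inv_mul_subset _ _ hβ) with h | h
    · exact ih h
    · rw [Finset.mem_inv_smul_finset_iff, Inv_s, Finset.mem_singleton] at h
      rw [← inv_smul_smul w β, h]
      exact hstable _ (inv_mem hw) _ (hΦ i hi)

theorem suppIn_of_mem_Inv {w : c.W} (hw : w ∈ c.Wsub S) {β : Fin n → ℤ} (hβ : β ∈ c.Inv w) :
    suppIn S β :=
  mem_of_mem_Inv (Φ := {β | suppIn S β}) (fun _ hi => suppIn_sroot hi)
    (fun _ hw _ => (suppIn_smul_iff hw subset_rfl).2) hw hβ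

theorem smul_nonneg_of_not_suppIn {w : c.W} (hw : w ∈ c.Wsub S) {β : Fin n → ℤ} (hβ : β ∈ c.R)
    (hpos : 0 ≤ β) (hS : ¬ suppIn S β) : 0 ≤ w • β :=
  (nonneg_or_nonpos (smul_mem w hβ)).resolve_right fun hneg =>
    hS (suppIn_of_mem_Inv hw (mem_Inv.2 ⟨hβ, hpos, hneg⟩))

theorem smul_nonneg_of_suppIn {v : c.W} (hv : ∀ i ∈ S, 0 ≤ v • c.sroot i) {x : Fin n → ℤ}
    (hx : suppIn S x) (hpos : 0 ≤ x) : 0 ≤ v • x := by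
  have hsum : x = ∑ i, x i • c.sroot i := pi_eq_sum_univ' x
  rw [hsum, Finset.smul_sum]
  refine Finset.sum_nonneg fun i _ => ?_
  rw [smul_comm]
  by_cases hi : i ∈ S
  · exact smul_nonneg (hpos i) (hv i hi)
  · rw [hx i hi, zero_smul]

theorem not_suppIn_of_mem_Inv {v : c.W} (hv : ∀ i ∈ S, 0 ≤ v • c.sroot i) {β : Fin n → ℤ}
    (hβ : β ∈ c.Inv v) : ¬ suppIn S β := by
  obtain ⟨hβ, hpos, hneg⟩ := mem_Inv.1 hβ
  exact fun hS => (not_nonneg_iff (smul_mem v hβ)).2 hneg (smul_nonneg_of_suppIn hv hS hpos)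

theorem inv_smul_nonneg_of_mem_Inv {v u : c.W} (hv : ∀ i ∈ S, 0 ≤ v • c.sroot i)
    (hu : u ∈ c.Wsub S) {γ : Fin n → ℤ} (hγ : γ ∈ c.Inv v) : 0 ≤ u⁻¹ • γ :=
  smul_nonneg_of_not_suppIn (inv_mem hu) (mem_Inv.1 hγ).1 (mem_Inv.1 hγ).2.1
    (not_suppIn_of_mem_Inv hv hγ)

theorem minRep_iff {v : c.W} :
    c.MinRep T S v ↔ v ∈ c.Wsub T ∧ ∀ i ∈ S, 0 ≤ v • c.sroot i := by
  refine and_congr_right fun _ => ⟨fun hmin i hi => ?_, fun hv u hu => ?_⟩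
  · refine (nonneg_or_nonpos (smul_mem v (c.simple_mem i))).resolve_right fun hneg => ?_
    have := hmin _ (s_mem_Wsub hi)
    have := len_mul_s_of_nonpos hneg
    omega
  · rw [len_mul_of_nonneg fun _ => inv_smul_nonneg_of_mem_Inv hv hu]
    exact Nat.le_add_right _ _

/-! ### Levels along a chain of parabolic subgroups -/

instance (S : Finset (Fin n)) : DecidablePred (suppIn S) :=
  fun γ => inferInstanceAs (Decidable (∀ i, i ∉ S → γ i = 0))

/-- The part of `F` at level `t` of the chain `D`: the vectors supported in `D (t + 1)` but not
in `D t`. -/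
def level (D : ℕ → Finset (Fin n)) (t : ℕ) (F : Finset (Fin n → ℤ)) : Finset (Fin n → ℤ) :=
  {β ∈ F | suppIn (D (t + 1)) β ∧ ¬ suppIn (D t) β}

variable {D : ℕ → Finset (Fin n)} {N t : ℕ} {F : Finset (Fin n → ℤ)}

theorem mem_level {β : Fin n → ℤ} :
    β ∈ level D t F ↔ β ∈ F ∧ suppIn (D (t + 1)) β ∧ ¬ suppIn (D t) β :=
  Finset.mem_filter

theorem card_level_eq_zero_of_suppIn (h : ∀ β ∈ F, suppIn (D t) β) : (level D t F).card = 0 := by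
  rw [Finset.card_eq_zero, level, Finset.filter_eq_empty_iff]
  exact fun β hβ hlev => hlev.2 (h β hβ)

theorem card_level_of_subset (hD : MonotoneOn D (Set.Iic N)) {s : ℕ} (hs : s < N) (ht : t < N)
    (hF : F ⊆ level D s F) : (level D t F).card = if t = s then F.card else 0 := by
  have hlev : ∀ β ∈ F, suppIn (D (s + 1)) β ∧ ¬ suppIn (D s) β :=
    fun β hβ => (mem_level.1 (hF hβ)).2
  rcases lt_trichotomy t s with h | rfl | h
  · rw [if_neg h.ne, Finset.card_eq_zero, level, Finset.filter_eq_empty_iff]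
    exact fun β hβ ht' => (hlev β hβ).2 (suppIn_mono (hD ht hs.le h) ht'.1)
  · rw [if_pos rfl]
    exact congrArg Finset.card ((Finset.filter_subset _ _).antisymm hF)
  · rw [if_neg h.ne']
    exact card_level_eq_zero_of_suppIn fun β hβ => suppIn_mono (hD hs ht.le h) (hlev β hβ).1

theorem sum_card_level_add (hD : MonotoneOn D (Set.Iic N)) (F : Finset (Fin n → ℤ)) :
    ∑ t ∈ Finset.range N, (level D t F).card + (F.filter (suppIn (D 0))).card =
      (F.filter (suppIn (D N))).card := by
  induction N with
  | zero => simp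
  | succ N ih =>
    have hsub : D N ⊆ D (N + 1) := hD N.le_succ Set.self_mem_Iic N.le_succ
    have hN : (F.filter (suppIn (D (N + 1)))).filter (suppIn (D N)) = F.filter (suppIn (D N)) := by
      rw [Finset.filter_filter]
      exact Finset.filter_congr fun β _ => and_iff_right_of_imp (suppIn_mono hsub)
    rw [Finset.sum_range_succ, add_right_comm,
      ih (hD.mono (Set.Iic_subset_Iic.2 (N.le_succ))), level, ← Finset.filter_filter, ← hN]
    exact Finset.card_filter_add_card_filter_not _

theorem card_level_Inv_mul {x y : c.W} (h : c.Inv (x * y) = c.Inv y ∪ y⁻¹ • c.Inv x) :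
    (level D t (c.Inv (x * y))).card =
      (level D t (c.Inv y)).card + (level D t (y⁻¹ • c.Inv x)).card := by
  rw [h, level, Finset.filter_union, Finset.card_union_of_disjoint
    (Finset.disjoint_filter_filter (disjoint_Inv_inv_smul_Inv x y))]
  rfl

theorem prod_mem_Wsub_of_minRep (hD : MonotoneOn D (Set.Iic N)) {v : Fin N → c.W}
    (hv : ∀ k : Fin N, c.MinRep (D (k + 1)) (D k) (v k)) :
    (List.ofFn v).reverse.prod ∈ c.Wsub (D N) := by
  refine list_prod_mem fun x hx => ?_
  obtain ⟨k, rfl⟩ := (List.mem_ofFn' _ _).1 (List.mem_reverse.1 hx)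
  exact Wsub_mono (hD k.2 Set.self_mem_Iic k.2) (hv k).1

/-- The inversions of `v_N ⋯ v_1` are those of `v_{N-1} ⋯ v_1`, all supported in `D (N - 1)`,
together with a translate of those of `v_N`, none of which is. -/
theorem card_level_Inv_prod (hD : MonotoneOn D (Set.Iic N)) {v : Fin N → c.W}
    (hv : ∀ k : Fin N, c.MinRep (D (k + 1)) (D k) (v k)) (t : Fin N) :
    (level D t (c.Inv (List.ofFn v).reverse.prod)).card = c.len (v t) := by
  induction N with
  | zero => exact t.elim0
  | succ N ih =>
    have hD' := hD.mono (Set.Iic_subset_Iic.2 (N.le_succ))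
    have hv' := fun k : Fin N => hv k.castSucc
    have hmem := prod_mem_Wsub_of_minRep hD' hv'
    obtain ⟨hlast, hpos⟩ := minRep_iff.1 (hv (Fin.last N))
    rw [List.ofFn_succ', List.concat_eq_append, List.reverse_append, List.reverse_singleton,
      List.singleton_append, List.prod_cons]
    set u := (List.ofFn fun k : Fin N => v k.castSucc).reverse.prod
    have hsub : u⁻¹ • c.Inv (v (Fin.last N)) ⊆ level D N (u⁻¹ • c.Inv (v (Fin.last N))) := by
      intro β hβ
      have hγ := Finset.mem_inv_smul_finset_iff.1 hβ
      have hsupp := suppIn_of_mem_Inv hlast hγ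
      refine mem_level.2 ⟨hβ, ?_, ?_⟩
      · exact (suppIn_smul_iff hmem (hD N.le_succ Set.self_mem_Iic N.le_succ)).1 hsupp
      · exact (suppIn_smul_iff hmem subset_rfl).not.1 (not_suppIn_of_mem_Inv hpos hγ)
    rw [card_level_Inv_mul (Inv_mul_of_nonneg fun γ => inv_smul_nonneg_of_mem_Inv hpos hmem),
      card_level_of_subset hD N.lt_succ_self t.2 hsub, Finset.card_smul_finset, ← len_eq_card_Inv]
    refine Fin.lastCases ?_ (fun k => ?_) t
    · simpa using card_level_eq_zero_of_suppIn fun β => suppIn_of_mem_Inv hmem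
    · simpa [k.2.ne] using ih hD' hv' k

/-! ### The grading -/

theorem monotoneOn_deltaSet (r : ℕ) : MonotoneOn (deltaSet n r) (Set.Iic (r + 1)) := by
  intro a ha b hb hab i hi
  simp only [deltaSet, Set.mem_Iic] at *
  split_ifs at * <;> simp only [Finset.mem_univ, Finset.mem_filter, true_and] at * <;> omega

/-- The `(t + 1)`-st component of `gr w`, computed as the number of inversions of `w` supported
in `Δ_{t+1}` but not in `Δ_t`; see `IsDecomp.len_eq_gr`. -/
noncomputable def gr (c : RootSystemData n) (r : ℕ) (w : c.W) (t : ℕ) : ℕ :=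
  (level (deltaSet n r) t (c.Inv w)).card

variable {r : ℕ} {w : c.W}

theorem IsDecomp.len_eq_gr {v : Fin (r + 1) → c.W} (hv : c.IsDecomp r w v) (t : Fin (r + 1)) :
    c.len (v t) = c.gr r w t := by
  rw [gr, hv.2, card_level_Inv_prod (monotoneOn_deltaSet r) hv.1]

theorem gr_last (hw : w ∈ c.Wsub (deltaSet n r r)) : c.gr r w r = 0 :=
  card_level_eq_zero_of_suppIn fun _ => suppIn_of_mem_Inv hw

theorem sum_card_level_deltaSet (hF : F ⊆ c.R) :
    ∑ t : Fin (r + 1), (level (deltaSet n r) t F).card = F.card := by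
  have h0 : F.filter (suppIn (deltaSet n r 0)) = ∅ := by
    refine Finset.filter_eq_empty_iff.2 fun β hβ h => c.root_ne_zero β (hF hβ) ?_
    exact funext fun i => h i (by simp [deltaSet])
  have htop : F.filter (suppIn (deltaSet n r (r + 1))) = F :=
    Finset.filter_true_of_mem fun β _ i hi => absurd (by simp [deltaSet]) hi
  have hsum := sum_card_level_add (monotoneOn_deltaSet r) F
  rw [h0, htop] at hsum
  simpa [Finset.sum_range] using hsum

theorem exists_gr_mul {x y : c.W} (hx : x ∈ c.Wsub (deltaSet n r r))
    (hy : y ∈ c.Wsub (deltaSet n r r)) (h : c.len (x * y) = c.len x + c.len y) :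
    ∃ p : Fin (r + 1) → ℕ, p (Fin.last r) = 0 ∧ ∑ k, p k = c.len x ∧
      ∀ t : Fin (r + 1), c.gr r (x * y) t = c.gr r y t + p t := by
  refine ⟨fun t => (level (deltaSet n r) t (y⁻¹ • c.Inv x)).card, ?_, ?_, fun t =>
    card_level_Inv_mul (Inv_mul_of_len_mul h)⟩
  · refine card_level_eq_zero_of_suppIn fun β hβ => (suppIn_smul_iff hy subset_rfl).1 ?_
    exact suppIn_of_mem_Inv hx (Finset.mem_inv_smul_finset_iff.1 hβ)
  · have hR : y⁻¹ • c.Inv x ⊆ c.R := fun β hβ => by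
      simpa using smul_mem y⁻¹ (mem_Inv.1 (Finset.mem_inv_smul_finset_iff.1 hβ)).1
    rw [sum_card_level_deltaSet hR, Finset.card_smul_finset, len_eq_card_Inv]

/-! ### Type `A` -/

/-- The vector `ε_a - ε_b` of type `A`, i.e. `α_{a+1} + ⋯ + α_b` for `a ≤ b` and the negative of
`pathRoot n b a` for `b ≤ a`. -/
def pathRoot (n a b : ℕ) : Fin n → ℤ :=
  fun i => (if a ≤ (i : ℕ) then 1 else 0) - if b ≤ (i : ℕ) then 1 else 0

variable {a b m q : ℕ}

theorem pathRoot_add_pathRoot (n a b d : ℕ) :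
    pathRoot n a b + pathRoot n b d = pathRoot n a d :=
  funext fun _ => sub_add_sub_cancel _ _ _

theorem neg_pathRoot (n a b : ℕ) : -pathRoot n a b = pathRoot n b a :=
  funext fun _ => neg_sub _ _

theorem pathRoot_self (n a : ℕ) : pathRoot n a a = 0 := funext fun _ => sub_self _

theorem pathRoot_succ (h : q < n) : pathRoot n q (q + 1) = c.sroot ⟨q, h⟩ := by
  ext i
  simp only [pathRoot, sroot, Pi.single_apply, Fin.ext_iff]
  split_ifs <;> omega

theorem pathRoot_nonneg_iff (ha : a ≤ n) : 0 ≤ pathRoot n a b ↔ a ≤ b := by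
  constructor
  · intro h
    by_contra! hba
    have := h ⟨b, hba.trans_le ha⟩
    simp [pathRoot, hba.not_ge] at this
  · intro h i
    simp only [pathRoot, Pi.zero_apply]
    split_ifs <;> omega

theorem pathRoot_nonpos_iff (hb : b ≤ n) : pathRoot n a b ≤ 0 ↔ b ≤ a := by
  rw [← neg_nonneg, neg_pathRoot, pathRoot_nonneg_iff hb]

theorem injOn_pathRoot_left (n b : ℕ) : Set.InjOn (fun a => pathRoot n a b) (Set.Iic n) := by
  intro a ha a' ha' h
  have hzero : pathRoot n a a' = 0 := by
    rw [← pathRoot_add_pathRoot n a b a', ← neg_pathRoot n a' b]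
    exact add_neg_eq_zero.2 h
  exact le_antisymm ((pathRoot_nonneg_iff ha).1 hzero.ge) ((pathRoot_nonpos_iff ha').1 hzero.le)

theorem mem_deltaSet_iff (ht : t ≤ r) {i : Fin n} : i ∈ deltaSet n r t ↔ (i : ℕ) < t := by
  simp [deltaSet, (Nat.lt_succ_of_le ht).ne]

theorem suppIn_pathRoot_iff (ht : t ≤ r) (hab : a < b) (hb : b ≤ n) :
    suppIn (deltaSet n r t) (pathRoot n a b) ↔ b ≤ t := by
  simp only [suppIn, mem_deltaSet_iff ht, pathRoot]
  constructor
  · intro h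
    by_contra! htb
    have := h ⟨b - 1, by omega⟩ (Nat.not_lt.2 (Nat.le_sub_one_of_lt htb))
    rw [if_pos (Nat.le_sub_one_of_lt hab), if_neg (show ¬ b ≤ b - 1 by omega)] at this
    exact one_ne_zero this
  · intro h i hi
    split_ifs <;> omega

theorem pathRoot_mem_level_iff (ht : t < r) (hab : a < b) (hb : b ≤ n) :
    pathRoot n a b ∈ level (deltaSet n r) t F ↔ pathRoot n a b ∈ F ∧ b = t + 1 := by
  rw [mem_level, suppIn_pathRoot_iff ht hab hb, suppIn_pathRoot_iff ht.le hab hb]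
  exact and_congr_right fun _ => by omega

/-- `w` acts on the roots `ε_a - ε_b` with `a, b ≤ r` by the permutation `π` of `{0, …, r}`;
the values of `π` beyond `r` are junk. -/
structure ActsAs (r : ℕ) (w : c.W) (π : Equiv.Perm ℕ) : Prop where
  apply_le_iff : ∀ a, π a ≤ r ↔ a ≤ r
  smul_pathRoot : ∀ {a b}, a ≤ r → b ≤ r → w • pathRoot n a b = pathRoot n (π a) (π b)

namespace ActsAs

variable {x y : c.W} {π τ : Equiv.Perm ℕ}

theorem one (r : ℕ) : ActsAs r (1 : c.W) 1 := ⟨fun _ => Iff.rfl, fun _ _ => one_smul _ _⟩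

theorem mul (hx : ActsAs r x π) (hy : ActsAs r y τ) : ActsAs r (x * y) (π * τ) where
  apply_le_iff a := (hx.apply_le_iff _).trans (hy.apply_le_iff a)
  smul_pathRoot ha hb := by
    rw [mul_smul, hy.smul_pathRoot ha hb,
      hx.smul_pathRoot ((hy.apply_le_iff _).2 ha) ((hy.apply_le_iff _).2 hb)]
    rfl

theorem inv (hx : ActsAs r x π) : ActsAs r x⁻¹ π⁻¹ := by
  have hinv : ∀ a, π⁻¹ a ≤ r ↔ a ≤ r := fun a => by
    simpa using (hx.apply_le_iff (π⁻¹ a)).symm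
  refine ⟨hinv, fun {a b} ha hb => ?_⟩
  rw [inv_smul_eq_iff, hx.smul_pathRoot ((hinv a).2 ha) ((hinv b).2 hb)]
  simp

theorem of_pathRoot_succ (hπ : ∀ a, π a ≤ r ↔ a ≤ r)
    (h : ∀ k < r, x • pathRoot n k (k + 1) = pathRoot n (π k) (π (k + 1))) : ActsAs r x π := by
  have hzero : ∀ b ≤ r, x • pathRoot n 0 b = pathRoot n (π 0) (π b) := by
    intro b hb
    induction b with
    | zero => rw [pathRoot_self, pathRoot_self, smul_zero]
    | succ b ih =>
      rw [← pathRoot_add_pathRoot n 0 b, smul_add, ih (by omega), h b hb, pathRoot_add_pathRoot]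
  refine ⟨hπ, fun {a b} ha hb => ?_⟩
  rw [← pathRoot_add_pathRoot n a 0, smul_add, hzero b hb, ← neg_pathRoot, smul_neg, hzero a ha,
    neg_pathRoot, pathRoot_add_pathRoot]

end ActsAs

theorem sN_of_lt (h : q < n) : c.sN q = c.s ⟨q, h⟩ := dif_pos h

theorem ActsAs.sN (hrn : r ≤ n) (hA : c.PathA r) (hq : q < r) :
    ActsAs r (c.sN q) (Equiv.swap q (q + 1)) := by
  refine .of_pathRoot_succ (fun a => ?_) fun k hk => ?_
  · rw [Equiv.swap_apply_def]
    split_ifs <;> omega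
  · have hkn : k < n := by omega
    have hqn : q < n := by omega
    obtain ⟨hadj, hfar⟩ := hA ⟨k, hkn⟩ ⟨q, hqn⟩ hk hq
    have hs : c.sN q • pathRoot n k (k + 1) =
        pathRoot n k (k + 1) - c.A ⟨k, hkn⟩ ⟨q, hqn⟩ • pathRoot n q (q + 1) := by
      rw [sN_of_lt hqn, pathRoot_succ (c := c) hkn, pathRoot_succ (c := c) hqn, s_smul_sroot]
    rw [hs]
    obtain rfl | rfl | rfl | h : k + 1 = q ∨ k = q ∨ k = q + 1 ∨ k + 2 ≤ q ∨ q + 2 ≤ k := by omega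
    · rw [hadj (.inl rfl), Equiv.swap_apply_of_ne_of_ne (by omega) (by omega),
        Equiv.swap_apply_left, ← pathRoot_add_pathRoot n k (k + 1) (k + 1 + 1)]
      module
    · rw [A_self, Equiv.swap_apply_left, Equiv.swap_apply_right, ← neg_pathRoot]
      module
    · rw [hadj (.inr rfl), Equiv.swap_apply_right,
        Equiv.swap_apply_of_ne_of_ne (by omega) (by omega),
        ← pathRoot_add_pathRoot n q (q + 1) (q + 1 + 1)]
      module
    · rw [hfar h, Equiv.swap_apply_of_ne_of_ne (by omega) (by omega),
        Equiv.swap_apply_of_ne_of_ne (by omega) (by omega), zero_smul, sub_zero]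

theorem pathRoot_mem (hrn : r ≤ n) (hA : c.PathA r) (hab : a < b) (hb : b ≤ r) :
    pathRoot n a b ∈ c.R := by
  induction b, hab using Nat.le_induction with
  | base => exact pathRoot_succ (c := c) (hb.trans hrn) ▸ c.simple_mem _
  | succ b hab ih =>
    have h := (ActsAs.sN hrn hA hb).smul_pathRoot (a := a) (b := b) (by omega) (by omega)
    rw [Equiv.swap_apply_of_ne_of_ne (by omega) (by omega), Equiv.swap_apply_left] at h
    exact h ▸ smul_mem _ (ih (by omega))

theorem exists_actsAs (hrn : r ≤ n) (hA : c.PathA r) (hw : w ∈ c.Wsub (deltaSet n r r)) :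
    ∃ π, ActsAs r w π := by
  induction hw using Wsub_induction with
  | one => exact ⟨1, .one r⟩
  | s_mul i hi w _ ih =>
    obtain ⟨π, hπ⟩ := ih
    have hs := ActsAs.sN hrn hA ((mem_deltaSet_iff le_rfl).1 hi)
    rw [sN_of_lt i.2] at hs
    exact ⟨_, hs.mul hπ⟩

theorem exists_pathRoot_of_mem_Inv (hrn : r ≤ n) (hA : c.PathA r)
    (hw : w ∈ c.Wsub (deltaSet n r r)) {β : Fin n → ℤ} (hβ : β ∈ c.Inv w) :
    ∃ a b, a < b ∧ b ≤ r ∧ β = pathRoot n a b := by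
  obtain ⟨a, b, ha, hb, rfl⟩ : ∃ a b, a ≤ r ∧ b ≤ r ∧ β = pathRoot n a b := by
    refine mem_of_mem_Inv (Φ := {β | ∃ a b, a ≤ r ∧ b ≤ r ∧ β = pathRoot n a b}) ?_ ?_ hw hβ
    · exact fun i hi => ⟨i, i + 1, ((mem_deltaSet_iff le_rfl).1 hi).le,
        (mem_deltaSet_iff le_rfl).1 hi, (pathRoot_succ i.2).symm⟩
    · rintro w hw _ ⟨a, b, ha, hb, rfl⟩
      obtain ⟨π, hπ⟩ := exists_actsAs hrn hA hw
      exact ⟨π a, π b, (hπ.apply_le_iff a).2 ha, (hπ.apply_le_iff b).2 hb,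
        hπ.smul_pathRoot ha hb⟩
  obtain ⟨hR, hpos, -⟩ := mem_Inv.1 hβ
  refine ⟨a, b, lt_of_le_of_ne ((pathRoot_nonneg_iff (ha.trans hrn)).1 hpos) ?_, hb, rfl⟩
  rintro rfl
  exact c.root_ne_zero _ hR (pathRoot_self n a)

theorem pathRoot_mem_Inv_iff (hrn : r ≤ n) (hA : c.PathA r) {π : Equiv.Perm ℕ}
    (hπ : ActsAs r w π) (hab : a < b) (hb : b ≤ r) : pathRoot n a b ∈ c.Inv w ↔ π b < π a := by
  have hπb : π b ≤ n := ((hπ.apply_le_iff b).2 hb).trans hrn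
  rw [mem_Inv, hπ.smul_pathRoot (hab.le.trans hb) hb, pathRoot_nonpos_iff hπb,
    pathRoot_nonneg_iff (by omega), (π.injective.ne hab.ne').le_iff_lt]
  exact ⟨fun h => h.2.2, fun h => ⟨pathRoot_mem hrn hA hab hb, hab.le, h⟩⟩

/-! ### Lehmer codes -/

/-- The `k`-th entry of the Lehmer code of `π`: the number of `a < k` with `π k < π a`. -/
def lehmerCode (π : Equiv.Perm ℕ) (k : ℕ) : ℕ := ((Finset.range k).filter fun a => π k < π a).card

theorem gr_eq_lehmerCode (hrn : r ≤ n) (hA : c.PathA r) (hw : w ∈ c.Wsub (deltaSet n r r))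
    {π : Equiv.Perm ℕ} (hπ : ActsAs r w π) (ht : t < r) :
    c.gr r w t = lehmerCode π (t + 1) := by
  have hlevel : level (deltaSet n r) t (c.Inv w) =
      ((Finset.range (t + 1)).filter fun a => π (t + 1) < π a).image
        fun a => pathRoot n a (t + 1) := by
    ext β
    simp only [Finset.mem_image, Finset.mem_filter, Finset.mem_range]
    constructor
    · intro hβ
      obtain ⟨a, b, hab, hb, rfl⟩ := exists_pathRoot_of_mem_Inv hrn hA hw (mem_level.1 hβ).1
      obtain ⟨hInv, rfl⟩ := (pathRoot_mem_level_iff ht hab (hb.trans hrn)).1 hβ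
      exact ⟨a, ⟨hab, (pathRoot_mem_Inv_iff hrn hA hπ hab hb).1 hInv⟩, rfl⟩
    · rintro ⟨a, ⟨ha, hlt⟩, rfl⟩
      refine (pathRoot_mem_level_iff ht ha (ht.trans_le hrn)).2 ⟨?_, rfl⟩
      exact (pathRoot_mem_Inv_iff hrn hA hπ ha ht).2 hlt
  rw [gr, hlevel, lehmerCode, Finset.card_image_of_injOn]
  refine (injOn_pathRoot_left n (t + 1)).mono fun a ha => ?_
  have := Finset.mem_range.1 (Finset.mem_filter.1 ha).1
  exact Set.mem_Iic.2 (by omega)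

section Code

variable (π : Equiv.Perm ℕ)

theorem lehmerCode_zero : lehmerCode π 0 = 0 := rfl

theorem lehmerCode_mul_swap_left (q : ℕ) :
    lehmerCode (π * Equiv.swap q (q + 1)) q =
      ((Finset.range q).filter fun a => π (q + 1) < π a).card := by
  refine congrArg Finset.card (Finset.filter_congr fun a ha => ?_)
  have haq := Finset.mem_range.1 ha
  simp [Equiv.swap_apply_of_ne_of_ne haq.ne (by omega : a ≠ q + 1)]

theorem lehmerCode_succ (q : ℕ) :
    lehmerCode π (q + 1) =
      lehmerCode (π * Equiv.swap q (q + 1)) q + if π (q + 1) < π q then 1 else 0 := by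
  rw [lehmerCode_mul_swap_left, lehmerCode, Finset.range_add_one, Finset.filter_insert]
  split_ifs
  · rw [Finset.card_insert_of_notMem (by simp)]
  · rfl

theorem lehmerCode_mul_swap_right (q : ℕ) :
    lehmerCode (π * Equiv.swap q (q + 1)) (q + 1) =
      lehmerCode π q + if π q < π (q + 1) then 1 else 0 := by
  simpa [mul_assoc] using lehmerCode_succ (π * Equiv.swap q (q + 1)) q

theorem lehmerCode_mul_swap_of_ne {q k : ℕ} (hq : k ≠ q) (hq' : k ≠ q + 1) :
    lehmerCode (π * Equiv.swap q (q + 1)) k = lehmerCode π k := by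
  refine Finset.card_equiv (Equiv.swap q (q + 1)) fun a => ?_
  have hlt : Equiv.swap q (q + 1) a < k ↔ a < k := by
    rw [Equiv.swap_apply_def]
    split_ifs <;> omega
  simp [hlt, Equiv.swap_apply_of_ne_of_ne hq hq']

variable {π}

theorem lehmerCode_le_mul_swap (h : π (q + 1) < π q) :
    lehmerCode π q ≤ lehmerCode (π * Equiv.swap q (q + 1)) q := by
  rw [lehmerCode_mul_swap_left]
  exact Finset.card_le_card (Finset.monotone_filter_right _ fun _ _ hlt => h.trans hlt)

theorem lehmerCode_add_one_le_iff :
    lehmerCode π q + 1 ≤ lehmerCode π (q + 1) ↔ π (q + 1) < π q := by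
  constructor
  · intro hcode
    by_contra! hle
    have hlt : π q < π (q + 1) := hle.lt_of_ne (π.injective.ne q.lt_succ_self.ne)
    have hle' := lehmerCode_le_mul_swap (π := π * Equiv.swap q (q + 1)) (q := q) (by simpa)
    rw [mul_assoc, Equiv.swap_mul_self, mul_one] at hle'
    rw [lehmerCode_succ, if_neg hlt.not_gt] at hcode
    omega
  · intro h
    rw [lehmerCode_succ, if_pos h]
    exact Nat.succ_le_succ (lehmerCode_le_mul_swap h)

theorem lehmerCode_mul_swap (h : π (q + 1) < π q) (k : ℕ) :
    lehmerCode (π * Equiv.swap q (q + 1)) k =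
      if k = q then lehmerCode π (q + 1) - 1
      else if k = q + 1 then lehmerCode π q
      else lehmerCode π k := by
  split_ifs with hq hq'
  · rw [hq, lehmerCode_succ π, if_pos h, Nat.add_sub_cancel]
  · rw [hq', lehmerCode_mul_swap_right, if_neg h.not_gt, Nat.add_zero]
  · exact lehmerCode_mul_swap_of_ne π hq hq'

end Code

/-! ### Multiplication by a simple reflection on the right -/

theorem sN_mem_Wsub (hrn : r ≤ n) (hm : m ≤ r) (hq : q < m) : c.sN q ∈ c.Wsub (deltaSet n r m) :=
  sN_of_lt (c := c) (hq.trans_le (hm.trans hrn)) ▸ s_mem_Wsub ((mem_deltaSet_iff hm).2 hq)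

theorem len_mul_sN_add_one_eq_iff (hrn : r ≤ n) {π : Equiv.Perm ℕ} (hπ : ActsAs r w π)
    (hq : q < r) : c.len (w * c.sN q) + 1 = c.len w ↔ π (q + 1) < π q := by
  have hqn : q < n := hq.trans_le hrn
  have hπq : π (q + 1) ≤ n := ((hπ.apply_le_iff _).2 hq).trans hrn
  rw [sN_of_lt hqn, len_mul_s_add_one_eq_iff, ← pathRoot_succ, hπ.smul_pathRoot hq.le hq,
    pathRoot_nonpos_iff hπq, (π.injective.ne q.lt_succ_self.ne').le_iff_lt]

theorem exists_actsAs_lehmerCode (hrn : r ≤ n) (hA : c.PathA r) (hw : w ∈ c.Wsub (deltaSet n r r))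
    {e : ℕ → ℕ} (he : e 0 = 0) (hgr : ∀ t < r, c.gr r w t = e (t + 1)) :
    ∃ π, ActsAs r w π ∧ ∀ k ≤ r, lehmerCode π k = e k := by
  obtain ⟨π, hπ⟩ := exists_actsAs hrn hA hw
  refine ⟨π, hπ, fun k hk => ?_⟩
  cases k with
  | zero => rw [lehmerCode_zero, he]
  | succ t => rw [← gr_eq_lehmerCode hrn hA hw hπ hk, hgr t hk]

theorem len_mul_sN_iff_gr (hrn : r ≤ n) (hA : c.PathA r) (hw : w ∈ c.Wsub (deltaSet n r r))
    {e : ℕ → ℕ} (he : e 0 = 0) (hgr : ∀ t < r, c.gr r w t = e (t + 1)) (hq : q < r) :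
    c.len (w * c.sN q) + 1 = c.len w ↔ e q + 1 ≤ e (q + 1) := by
  obtain ⟨π, hπ, hcode⟩ := exists_actsAs_lehmerCode hrn hA hw he hgr
  rw [len_mul_sN_add_one_eq_iff hrn hπ hq, ← lehmerCode_add_one_le_iff, hcode q hq.le,
    hcode (q + 1) hq]

theorem gr_mul_sN (hrn : r ≤ n) (hA : c.PathA r) (hw : w ∈ c.Wsub (deltaSet n r r))
    {e : ℕ → ℕ} (he : e 0 = 0) (hgr : ∀ t ≤ r, c.gr r w t = e (t + 1)) (hq : q < r)
    (hlen : c.len (w * c.sN q) + 1 = c.len w) (ht : t ≤ r) :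
    c.gr r (w * c.sN q) t =
      if t + 1 = q then e (q + 1) - 1 else if t + 1 = q + 1 then e q else e (t + 1) := by
  have hmem := mul_mem hw (sN_mem_Wsub hrn le_rfl hq)
  rcases ht.eq_or_lt with rfl | ht
  · rw [gr_last hmem, if_neg (by omega), if_neg (by omega), ← hgr t le_rfl, gr_last hw]
  · obtain ⟨π, hπ, hcode⟩ := exists_actsAs_lehmerCode hrn hA hw he fun t ht => hgr t ht.le
    rw [gr_eq_lehmerCode hrn hA hmem (hπ.mul (.sN hrn hA hq)) ht,
      lehmerCode_mul_swap ((len_mul_sN_add_one_eq_iff hrn hπ hq).1 hlen), hcode q hq.le,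
      hcode (q + 1) hq, hcode (t + 1) ht]

/-! ### The elements `u_i^{(m)}` -/

variable {i : ℕ}

theorem uElt_zero (m : ℕ) : c.uElt 0 m = 1 := by simp [uElt, uu]

theorem uElt_succ (h : i < m) : c.uElt (i + 1) m = c.sN (m - i - 1) * c.uElt i m := by
  have hlen : m + 1 - (m - (i + 1) + 1) = m + 1 - (m - i + 1) + 1 := by omega
  have hstart : m - (i + 1) + 1 + 1 = m - i + 1 := by omega
  rw [uElt, uElt, uu, uu, hlen, List.range'_succ, List.map_cons, List.prod_cons, hstart,
    Nat.add_sub_cancel, Nat.sub_sub]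

theorem uElt_one (q : ℕ) : c.uElt 1 (q + 1) = c.sN q := by
  rw [uElt_succ q.succ_pos, uElt_zero, mul_one]
  rfl

theorem uElt_mem_Wsub (hrn : r ≤ n) (hm : m ≤ r) (hi : i ≤ m) :
    c.uElt i m ∈ c.Wsub (deltaSet n r m) := by
  induction i with
  | zero => exact uElt_zero (c := c) m ▸ one_mem _
  | succ i ih =>
    rw [uElt_succ hi]
    exact mul_mem (sN_mem_Wsub hrn hm (by omega)) (ih (by omega))

theorem uElt_smul_pathRoot (hrn : r ≤ n) (hA : c.PathA r) (hm : m ≤ r) (ha : a + i < m) :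
    c.uElt i m • pathRoot n a m = pathRoot n a (m - i) := by
  induction i with
  | zero => rw [uElt_zero, one_smul, Nat.sub_zero]
  | succ i ih =>
    obtain ⟨q, hq⟩ : ∃ q, m - i = q + 1 := ⟨m - i - 1, by omega⟩
    rw [uElt_succ (by omega), mul_smul, ih (by omega), Nat.sub_add_eq, hq, Nat.add_sub_cancel,
      (ActsAs.sN hrn hA (by omega)).smul_pathRoot (by omega) (by omega),
      Equiv.swap_apply_of_ne_of_ne (by omega) (by omega), Equiv.swap_apply_right]

theorem Inv_uElt (hrn : r ≤ n) (hA : c.PathA r) (hm : m ≤ r) (hi : i ≤ m) :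
    c.Inv (c.uElt i m) = (Finset.Ico (m - i) m).image fun a => pathRoot n a m := by
  induction i with
  | zero => rw [uElt_zero, Inv_one, Nat.sub_zero, Finset.Ico_self, Finset.image_empty]
  | succ i ih =>
    obtain ⟨q, hq⟩ : ∃ q, m - i = q + 1 := ⟨m - i - 1, by omega⟩
    have hqn : q < n := by omega
    have hroot : (c.uElt i m)⁻¹ • c.sroot ⟨q, hqn⟩ = pathRoot n q m := by
      rw [inv_smul_eq_iff, uElt_smul_pathRoot hrn hA hm (by omega), hq, pathRoot_succ]
    have hpos : 0 ≤ pathRoot n q m := (pathRoot_nonneg_iff hqn.le).2 (by omega)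
    have hIco : Finset.Ico q m = insert q (Finset.Ico (q + 1) m) :=
      (Finset.insert_Ico_add_one_left_eq_Ico (by omega)).symm
    rw [uElt_succ hi, Nat.sub_add_eq, hq, Nat.add_sub_cancel, sN_of_lt hqn,
      Inv_mul_of_nonneg (by simpa [Inv_s, hroot] using hpos), ih (by omega), Inv_s,
      Finset.smul_finset_singleton, hroot, hq, hIco, Finset.image_insert, Finset.union_comm,
      Finset.insert_eq]

theorem len_uElt (hrn : r ≤ n) (hA : c.PathA r) (hm : m ≤ r) (hi : i ≤ m) :
    c.len (c.uElt i m) = i := by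
  rw [len_eq_card_Inv, Inv_uElt hrn hA hm hi, Finset.card_image_of_injOn, Nat.card_Ico,
    Nat.sub_sub_self hi]
  refine (injOn_pathRoot_left n m).mono fun a ha => ?_
  exact (Finset.mem_Ico.1 ha).2.le.trans (hm.trans hrn)

theorem minRep_uElt (hrn : r ≤ n) (hA : c.PathA r) (hm : m < r) (hi : i ≤ m + 1) :
    c.MinRep (deltaSet n r (m + 1)) (deltaSet n r m) (c.uElt i (m + 1)) := by
  refine minRep_iff.2 ⟨uElt_mem_Wsub hrn hm hi, fun k hk => ?_⟩
  refine (nonneg_or_nonpos (smul_mem _ (c.simple_mem k))).resolve_right fun hneg => ?_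
  have hInv : c.sroot k ∈ c.Inv (c.uElt i (m + 1)) :=
    mem_Inv.2 ⟨c.simple_mem k, sroot_nonneg k, hneg⟩
  rw [Inv_uElt hrn hA hm hi] at hInv
  obtain ⟨a, ha, hak⟩ := Finset.mem_image.1 hInv
  -- `α_{k+1}` lies in the span of `Δ_m`, while `ε_a - ε_{m+1}` does not.
  have hsupp := (suppIn_pathRoot_iff hm.le (Finset.mem_Ico.1 ha).2 (hm.trans_le hrn)).1
    (hak ▸ suppIn_sroot hk)
  omega

theorem prod_uElt_mem_Wsub (hrn : r ≤ n) (hA : c.PathA r) {e : ℕ → ℕ} (he : ∀ t ≤ r, e t ≤ t) :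
    (List.ofFn fun t : Fin r => c.uElt (e (t + 1)) (t + 1)).reverse.prod ∈
      c.Wsub (deltaSet n r r) :=
  prod_mem_Wsub_of_minRep ((monotoneOn_deltaSet r).mono (Set.Iic_subset_Iic.2 r.le_succ))
    fun k => minRep_uElt hrn hA k.2 (he _ k.2)

theorem gr_prod_uElt (hrn : r ≤ n) (hA : c.PathA r) {e : ℕ → ℕ} (he : ∀ t ≤ r, e t ≤ t)
    (hlast : e (r + 1) = 0) (ht : t ≤ r) :
    c.gr r (List.ofFn fun t : Fin r => c.uElt (e (t + 1)) (t + 1)).reverse.prod t =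
      e (t + 1) := by
  rcases ht.eq_or_lt with rfl | ht
  · rw [gr_last (prod_uElt_mem_Wsub hrn hA he), hlast]
  · have hlen := card_level_Inv_prod
      ((monotoneOn_deltaSet (n := n) r).mono (Set.Iic_subset_Iic.2 r.le_succ))
      (fun k => minRep_uElt hrn hA k.2 (he _ k.2)) ⟨t, ht⟩
    rw [gr, hlen, len_uElt hrn hA ht (he _ ht)]

/-! ### Multiplication on the left -/

theorem exists_gr_uElt_mul (hrn : r ≤ n) (hA : c.PathA r) (hw : w ∈ c.Wsub (deltaSet n r r))
    (hi : 1 ≤ i) (him : i ≤ m) (hm : m ≤ r) (hlen : c.len (c.uElt i m * w) = i + c.len w) :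
    ∃ k < r, ∀ t ≤ r, c.gr r (c.uElt i m * w) t = c.gr r w t + if t = k then i else 0 := by
  have hu := len_uElt hrn hA hm him
  have hInv : c.Inv (c.uElt i m * w) = c.Inv w ∪ w⁻¹ • c.Inv (c.uElt i m) :=
    Inv_mul_of_len_mul (by rw [hlen, hu])
  obtain ⟨π, hπ⟩ := exists_actsAs hrn hA hw
  have hend : π⁻¹ m ≤ r := (hπ.inv.apply_le_iff m).2 hm
  have hroots : ∀ β ∈ w⁻¹ • c.Inv (c.uElt i m), ∃ b < π⁻¹ m, β = pathRoot n b (π⁻¹ m) := by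
    intro β hβ
    have hpos : 0 ≤ β := (mem_Inv.1 (hInv ▸ Finset.mem_union_right _ hβ)).2.1
    rw [Inv_uElt hrn hA hm him, Finset.mem_inv_smul_finset_iff] at hβ
    obtain ⟨a, ha, hβ⟩ := Finset.mem_image.1 hβ
    have ham := (Finset.mem_Ico.1 ha).2
    rw [eq_comm, ← eq_inv_smul_iff, hπ.inv.smul_pathRoot (ham.le.trans hm) hm] at hβ
    subst hβ
    have hle := (hπ.inv.apply_le_iff a).2 (ham.le.trans hm)
    exact ⟨_, ((pathRoot_nonneg_iff (hle.trans hrn)).1 hpos).lt_of_ne (π⁻¹.injective.ne ham.ne),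
      rfl⟩
  have hcard : (w⁻¹ • c.Inv (c.uElt i m)).card = i := by
    rw [Finset.card_smul_finset, ← len_eq_card_Inv, hu]
  obtain ⟨β, hβ⟩ := Finset.card_pos.1 (hi.trans hcard.ge)
  obtain ⟨b, hb, -⟩ := hroots β hβ
  obtain ⟨k, hk⟩ : ∃ k, π⁻¹ m = k + 1 := Nat.exists_eq_succ_of_ne_zero (by omega)
  rw [hk] at hroots hend
  refine ⟨k, hend, fun t ht => ?_⟩
  have hlevel : w⁻¹ • c.Inv (c.uElt i m) ⊆
      level (deltaSet n r) k (w⁻¹ • c.Inv (c.uElt i m)) := by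
    intro β hβ
    obtain ⟨b, hb, rfl⟩ := hroots β hβ
    exact (pathRoot_mem_level_iff hend hb (hend.trans hrn)).2 ⟨hβ, rfl⟩
  rw [gr, card_level_Inv_mul hInv, card_level_of_subset (monotoneOn_deltaSet r) (by omega)
    (by omega) hlevel, hcard, gr]

theorem exists_gr_sN_mul (hrn : r ≤ n) (hA : c.PathA r) (hw : w ∈ c.Wsub (deltaSet n r r))
    (hq : q < r) (hlen : c.len (c.sN q * w) + 1 = c.len w) :
    ∃ k < r, ∀ t ≤ r, c.gr r w t = c.gr r (c.sN q * w) t + if t = k then 1 else 0 := by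
  have hcancel : c.uElt 1 (q + 1) * (c.sN q * w) = w := by
    rw [uElt_one, ← mul_assoc, sN_of_lt (hq.trans_le hrn), s_mul_self, one_mul]
  simpa only [hcancel] using exists_gr_uElt_mul hrn hA (mul_mem (sN_mem_Wsub hrn le_rfl hq) hw)
    le_rfl q.succ_pos hq (by rw [hcancel, ← hlen, add_comm])

theorem exists_gr_add_eq_gr {x y : c.W} (hx : x ∈ c.Wsub (deltaSet n r r))
    (hy : y ∈ c.Wsub (deltaSet n r r)) (h : c.len (x * y) + c.len x = c.len y) :
    ∃ p : Fin (r + 1) → ℕ, p (Fin.last r) = 0 ∧ ∑ k, p k = c.len x ∧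
      ∀ t : Fin (r + 1), c.gr r (x * y) t + p t = c.gr r y t := by
  obtain ⟨p, hlast, hsum, hgr⟩ := exists_gr_mul (inv_mem hx) (mul_mem hx hy)
    (by rw [inv_mul_cancel_left, len_inv, ← h, add_comm])
  refine ⟨p, hlast, hsum.trans (len_inv x), fun t => ?_⟩
  rw [← hgr, inv_mul_cancel_left]

theorem existsUnique_eq_add_ite {f g : ℕ → ℕ} {d : ℕ} (hd : d ≠ 0)
    (h : ∃ k < r, ∀ t ≤ r, f t = g t + if t = k then d else 0) :
    ∃! k : Fin (r + 1), (k : ℕ) < r ∧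
      ∀ t : Fin (r + 1), (f t : ℤ) = g t + if t = k then (d : ℤ) else 0 := by
  obtain ⟨k, hk, hfg⟩ := h
  refine ⟨⟨k, hk.trans r.lt_succ_self⟩, ⟨hk, fun t => ?_⟩, fun k' hk' => ?_⟩
  · rw [hfg t t.is_le]
    simp [Fin.ext_iff]
  · have := hk'.2 k'
    rw [hfg k' k'.is_le, if_pos rfl] at this
    by_contra hne
    rw [if_neg fun h => hne (Fin.ext h)] at this
    omega

end RootSystemData

/-- Let `w = u_{i_r}^{(r)} ⋯ u_{i_1}^{(1)}` with `0 ≤ i_k ≤ k` (so `w ∈ W_{Δ_P}` and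
`gr(w) = Σ_{k=1}^r i_k e_k`), and let `1 ≤ j ≤ m ≤ r`.
(a) If `ℓ(u_j^{(m)} w) = j + ℓ(w)` then `gr(u_j^{(m)} w) = gr(w) + j·e_k` for a
unique `1 ≤ k ≤ r`.
(b) If `ℓ(s_j w) = ℓ(w) - 1` then `gr(s_j w) = gr(w) - e_k` for a unique `1 ≤ k ≤ r`.
(c) `ℓ(w s_j) = ℓ(w) - 1` iff `i_j ≥ i_{j-1} + 1` (with `i_0 := 0`), in which case
`gr(w s_j)` is obtained from `gr(w)` by replacing the `(j-1)`-st component by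
`i_j - 1` and the `j`-th component by `i_{j-1}`.
(d) If `w' ∈ W_{Δ_P}` satisfies `ℓ(w'w) = ℓ(w) ± ℓ(w')` then there are nonnegative
integers `p_1, …, p_r` with `Σ p_k = ℓ(w')` and `gr(w'w) = gr(w) ± Σ p_k e_k`. -/
theorem gr_of_products_in_WP {n : ℕ} (c : RootSystemData n)
    (r : ℕ) (hr1 : 1 ≤ r) (hrn : r < n) (hA : c.PathA r)
    (ii : ℕ → ℕ) (hii0 : ii 0 = 0) (hii_big : ∀ t, r < t → ii t = 0)
    (hii_le : ∀ t, t ≤ r → ii t ≤ t)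
    (w : c.W)
    (hw : w = (List.ofFn fun t : Fin r =>
      c.uElt (ii ((t : ℕ) + 1)) ((t : ℕ) + 1)).reverse.prod)
    (j m : ℕ) (hj1 : 1 ≤ j) (hjm : j ≤ m) (hmr : m ≤ r) :
    w ∈ c.Wsub (deltaSet n r r) ∧
    (∀ v : Fin (r + 1) → c.W, c.IsDecomp r w v →
      ∀ t : Fin (r + 1), c.len (v t) = ii ((t : ℕ) + 1)) ∧
    (c.len (c.uElt j m * w) = j + c.len w →
      ∀ v' : Fin (r + 1) → c.W, c.IsDecomp r (c.uElt j m * w) v' →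
        ∃! k : Fin (r + 1), (k : ℕ) < r ∧
          ∀ t : Fin (r + 1),
            (c.len (v' t) : ℤ) = (ii ((t : ℕ) + 1) : ℤ) + if t = k then (j : ℤ) else 0) ∧
    (c.len (c.sN (j - 1) * w) + 1 = c.len w →
      ∀ v' : Fin (r + 1) → c.W, c.IsDecomp r (c.sN (j - 1) * w) v' →
        ∃! k : Fin (r + 1), (k : ℕ) < r ∧
          ∀ t : Fin (r + 1),
            (c.len (v' t) : ℤ) = (ii ((t : ℕ) + 1) : ℤ) - if t = k then 1 else 0) ∧
    ((c.len (w * c.sN (j - 1)) + 1 = c.len w ↔ ii (j - 1) + 1 ≤ ii j) ∧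
      (c.len (w * c.sN (j - 1)) + 1 = c.len w →
        ∀ v' : Fin (r + 1) → c.W, c.IsDecomp r (w * c.sN (j - 1)) v' →
          ∀ t : Fin (r + 1),
            c.len (v' t) =
              if (t : ℕ) + 1 = j - 1 then ii j - 1
              else if (t : ℕ) + 1 = j then ii (j - 1)
              else ii ((t : ℕ) + 1))) ∧
    (∀ w' ∈ c.Wsub (deltaSet n r r),
      (c.len (w' * w) = c.len w + c.len w' →
        ∃ p : Fin (r + 1) → ℕ, p ⟨r, by omega⟩ = 0 ∧ (∑ k, p k) = c.len w' ∧
          ∀ v' : Fin (r + 1) → c.W, c.IsDecomp r (w' * w) v' →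
            ∀ t : Fin (r + 1), c.len (v' t) = ii ((t : ℕ) + 1) + p t) ∧
      (c.len (w' * w) + c.len w' = c.len w →
        ∃ p : Fin (r + 1) → ℕ, p ⟨r, by omega⟩ = 0 ∧ (∑ k, p k) = c.len w' ∧
          ∀ v' : Fin (r + 1) → c.W, c.IsDecomp r (w' * w) v' →
            ∀ t : Fin (r + 1), c.len (v' t) + p t = ii ((t : ℕ) + 1))) := by
  have hwP : w ∈ c.Wsub (deltaSet n r r) :=
    hw ▸ RootSystemData.prod_uElt_mem_Wsub hrn.le hA hii_le
  have hgr : ∀ t ≤ r, c.gr r w t = ii (t + 1) := fun t =>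
    hw ▸ RootSystemData.gr_prod_uElt hrn.le hA hii_le (hii_big _ r.lt_succ_self)
  obtain ⟨q, rfl⟩ : ∃ q, j = q + 1 := Nat.exists_eq_add_of_le' hj1
  have hq : q < r := hjm.trans hmr
  refine ⟨hwP, fun v hv t => (hv.len_eq_gr t).trans (hgr t t.is_le), fun hlen v hv => ?_,
    fun hlen v hv => ?_, ⟨?_, fun hlen v hv t => ?_⟩,
    fun w' hw' => ⟨fun hlen => ?_, fun hlen => ?_⟩⟩
  · simpa only [hv.len_eq_gr, hgr, Fin.is_le] using
      RootSystemData.existsUnique_eq_add_ite q.succ_ne_zero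
        (RootSystemData.exists_gr_uElt_mul hrn.le hA hwP hj1 hjm hmr hlen)
  · simpa only [hv.len_eq_gr, hgr, Fin.is_le, eq_sub_iff_add_eq, @eq_comm ℤ (_ + _), Nat.cast_one,
      Nat.add_sub_cancel] using
      RootSystemData.existsUnique_eq_add_ite one_ne_zero
        (RootSystemData.exists_gr_sN_mul hrn.le hA hwP hq hlen)
  · exact RootSystemData.len_mul_sN_iff_gr hrn.le hA hwP hii0 (fun t ht => hgr t ht.le) hq
  · exact (hv.len_eq_gr t).trans
      (RootSystemData.gr_mul_sN hrn.le hA hwP hii0 hgr hq hlen t.is_le)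
  · obtain ⟨p, hlast, hsum, hp⟩ := RootSystemData.exists_gr_mul hw' hwP (hlen.trans (add_comm _ _))
    exact ⟨p, hlast, hsum, fun v hv t => by rw [hv.len_eq_gr, hp, hgr t t.is_le]⟩
  · obtain ⟨p, hlast, hsum, hp⟩ := RootSystemData.exists_gr_add_eq_gr hw' hwP hlen
    exact ⟨p, hlast, hsum, fun v hv t => by rw [hv.len_eq_gr, hp, hgr t t.is_le]⟩
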